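/- For every integer n ≥ 1, the number of permutations of {1,…,n} having exactly one fixed point equals D_n, the number of arrangements of {1,…,n} avoiding all patterns 12, 23, …, (n−1)n, n1; equivalently, the number of permutations of an n-element set with exactly one fixed point equals n·Der_{n−1}. -/

import Mathlib

/-- The arrangement (one-line notation) of `σ` avoids all patterns
`12, 23, …, (n-1)n`: digit `i` (encoded as the value `i-1` in `Fin n`)
is never immediately followed by digit `i+1`. -/
def avoidsSucc (n : ℕ) (σ : Equiv.Perm (Fin n)) : Prop :=
  ∀ (k : ℕ) (h : k + 1 < n),
    (σ ⟨k + 1, h⟩).val ≠ (σ ⟨k, Nat.lt_of_succ_lt h⟩).val + 1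

/-- The arrangement of `σ` contains the pattern `n1`: digit `n` (value `n-1`)
is immediately followed by digit `1` (value `0`). -/
def containsN1 (n : ℕ) (σ : Equiv.Perm (Fin n)) : Prop :=
  ∃ (k : ℕ) (h : k + 1 < n),
    (σ ⟨k, Nat.lt_of_succ_lt h⟩).val = n - 1 ∧ (σ ⟨k + 1, h⟩).val = 0

/-- `dCount n` = number of arrangements of `{1,…,n}` avoiding `12, 23, …, (n-1)n`. -/
noncomputable def dCount (n : ℕ) : ℕ :=
  Nat.card {σ : Equiv.Perm (Fin n) // avoidsSucc n σ}

/-- `DCount n` = number of arrangements of `{1,…,n}` avoiding `12, 23, …, (n-1)n, n1`. -/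
noncomputable def DCount (n : ℕ) : ℕ :=
  Nat.card {σ : Equiv.Perm (Fin n) // avoidsSucc n σ ∧ ¬ containsN1 n σ}

/-! Rotating the values of an arrangement cyclically so that it starts with `1` shows that `D_n` is
`n` times the number of arrangements with first digit `1` and no digit `i` directly followed by
`i + 1`; write such an arrangement, shifted to start at `0`, as `0 w₁ ⋯ w_m` with `m = n - 1`.
Inserting a new maximum `m + 1` after a letter `x` creates the succession `m (m + 1)` if `x = m`,
and otherwise only destroys a possible succession `x (x + 1)`. By induction on `m`, the number of
words whose set of successions is exactly `S` is therefore `Der_{m - |S|}`. -/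

open Equiv Function

theorem mul_numDerangements_add (n : ℕ) :
    n * (numDerangements n + numDerangements (n - 1)) = numDerangements (n + 1) := by
  cases n with
  | zero => simp
  | succ n => rw [numDerangements_add_two, Nat.add_sub_cancel, add_comm (numDerangements n)]

section FixedPoints

variable {α : Type*} [Fintype α]

theorem card_perm_fixedPoints_eq_singleton (a : α) :
    Nat.card {σ : Perm α // fixedPoints σ = {a}} = numDerangements (Fintype.card α - 1) := by
  classical
  have fixes_iff (σ : Perm α) :
      (∀ x, ¬x ≠ a ↔ x ∈ fixedPoints σ) ↔ fixedPoints σ = {a} := by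
    simp [Set.ext_iff, iff_comm]
  rw [← Nat.card_congr ((derangements.subtypeEquiv (· ≠ a)).trans (subtypeEquivRight fixes_iff)),
    Nat.card_eq_fintype_card, card_derangements_eq_numDerangements]
  simp

theorem card_perm_card_fixedPoints_eq_one :
    Nat.card {σ : Perm α // Nat.card {k // σ k = k} = 1} =
      Fintype.card α * numDerangements (Fintype.card α - 1) := by
  let forgetPoint : (Σ a : α, {σ : Perm α // fixedPoints σ = {a}}) →
      {σ : Perm α // Nat.card {k // σ k = k} = 1} :=
    fun p => ⟨p.2.1, Set.ncard_eq_one.2 ⟨p.1, p.2.2⟩⟩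
  have bijective : Bijective forgetPoint := by
    constructor
    · rintro ⟨a, σ, ha⟩ ⟨b, τ, hb⟩ h
      obtain rfl : σ = τ := congrArg Subtype.val h
      obtain rfl : a = b := Set.singleton_injective (ha.symm.trans hb)
      rfl
    · rintro ⟨σ, hσ⟩
      obtain ⟨a, ha⟩ := Set.ncard_eq_one.1 hσ
      exact ⟨⟨a, σ, ha⟩, rfl⟩
  rw [← Nat.card_congr (Equiv.ofBijective forgetPoint bijective), Nat.card_sigma]
  simp [card_perm_fixedPoints_eq_singleton]

end FixedPoints

section Rotation

variable {m : ℕ}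

/-- The arrangement `σ` of `ℤ/(m+1)` has no value directly followed by its cyclic successor. -/
def AvoidsCyclicSucc (σ : Perm (Fin (m + 1))) : Prop :=
  ∀ k : Fin m, σ k.succ ≠ σ k.castSucc + 1

theorem fin_eq_add_one_iff {a b : Fin (m + 1)} :
    b = a + 1 ↔ b.val = a.val + 1 ∨ a.val = m ∧ b.val = 0 := by
  rw [Fin.ext_iff, Fin.val_add_one]
  split_ifs with h <;> simp only [Fin.ext_iff, Fin.val_last] at h <;> omega

theorem avoidsSucc_and_not_containsN1_iff {σ : Perm (Fin (m + 1))} :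
    avoidsSucc (m + 1) σ ∧ ¬containsN1 (m + 1) σ ↔ AvoidsCyclicSucc σ := by
  simp only [avoidsSucc, containsN1, AvoidsCyclicSucc, ne_eq, fin_eq_add_one_iff, not_or,
    forall_and, Fin.forall_iff, not_exists, Nat.add_lt_add_iff_right, Nat.add_sub_cancel]
  rfl

theorem avoidsCyclicSucc_trans_addRight {σ : Perm (Fin (m + 1))} {a : Fin (m + 1)} :
    AvoidsCyclicSucc (σ.trans (Equiv.addRight a)) ↔ AvoidsCyclicSucc σ := by
  simp [AvoidsCyclicSucc, add_right_comm _ a 1]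

/-- The arrangement `0, e 0 + 1, …, e (m - 1) + 1` of `{0, …, m}`. -/
def consZero (e : Perm (Fin m)) : Perm (Fin (m + 1)) :=
  Perm.decomposeFin.symm (0, e)

theorem bijective_rotate_consZero :
    Bijective fun p : Fin (m + 1) × Perm (Fin m) =>
      (consZero p.2).trans (Equiv.addRight p.1) := by
  rw [Fintype.bijective_iff_injective_and_card]
  constructor
  · rintro ⟨a, e⟩ ⟨b, f⟩ h
    obtain rfl : a = b := by simpa [consZero] using DFunLike.congr_fun h 0
    have : consZero e = consZero f := by
      refine Equiv.ext fun k => ?_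
      simpa using DFunLike.congr_fun h k
    simpa [consZero] using this
  · simp [Fintype.card_perm, Nat.factorial_succ]

theorem card_avoidsCyclicSucc :
    Nat.card {σ : Perm (Fin (m + 1)) // AvoidsCyclicSucc σ} =
      (m + 1) * Nat.card {e : Perm (Fin m) // AvoidsCyclicSucc (consZero e)} := by
  let rotation := Equiv.ofBijective _ (bijective_rotate_consZero (m := m))
  have avoids_iff (p : Fin (m + 1) × Perm (Fin m)) :
      AvoidsCyclicSucc (consZero p.2) ↔ AvoidsCyclicSucc (rotation p) :=
    avoidsCyclicSucc_trans_addRight.symm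
  rw [← Nat.card_congr (rotation.subtypeEquiv avoids_iff),
    Nat.card_congr (subtypeProdEquivSigmaSubtype fun _ e => AvoidsCyclicSucc (consZero e)),
    Nat.card_sigma]
  simp

theorem ofFn_consZero (e : Perm (Fin m)) :
    List.ofFn (fun k => (consZero e k).val) = 0 :: (List.ofFn e).map (fun k => k.val + 1) := by
  simp [consZero, List.map_ofFn, comp_def]

theorem avoidsCyclicSucc_consZero_iff (e : Perm (Fin m)) :
    AvoidsCyclicSucc (consZero e) ↔
      (0 :: (List.ofFn e).map fun k => k.val + 1).IsChain (fun a b => b ≠ a + 1) := by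
  rw [← ofFn_consZero, List.isChain_ofFn]
  have succ_ne_zero (k : Fin m) : (consZero e k.succ).val ≠ 0 := by simp [consZero]
  simp only [AvoidsCyclicSucc, ne_eq, fin_eq_add_one_iff, succ_ne_zero, and_false, or_false]
  simp only [Fin.forall_iff, Nat.add_lt_add_iff_right]
  rfl

end Rotation

section CountMap

variable {α : Type*} [DecidableEq α] {M : Multiset (Finset α)} {S : Finset α} {x : α}

theorem count_map_insert_of_mem (hM : ∀ T ∈ M, x ∉ T) (hx : x ∈ S) :
    (M.map (insert x)).count S = M.count (S.erase x) := by
  rw [Multiset.count_map, Multiset.count_eq_card_filter_eq]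
  congr 1
  exact Multiset.filter_congr fun T hT => by grind

theorem count_map_insert_of_notMem (hx : x ∉ S) : (M.map (insert x)).count S = 0 := by
  rw [Multiset.count_eq_zero, Multiset.mem_map]
  grind

theorem count_map_erase_of_mem (hx : x ∈ S) : (M.map (Finset.erase · x)).count S = 0 := by
  rw [Multiset.count_eq_zero, Multiset.mem_map]
  grind

theorem count_map_erase_of_notMem (hx : x ∉ S) :
    (M.map (Finset.erase · x)).count S = M.count S + M.count (insert x S) := by
  induction M using Multiset.induction with
  | empty => simp
  | cons T M ih =>
    have erase_eq_iff : S = T.erase x ↔ S = T ∨ insert x S = T := by grind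
    have : ¬(S = T ∧ insert x S = T) := by grind
    simp only [Multiset.map_cons, Multiset.count_cons, ih, erase_eq_iff]
    grind

end CountMap

theorem map_ofFn_univ_perm (m : ℕ) :
    (Finset.univ.val.map fun e : Perm (Fin m) => List.ofFn e) =
      ((List.finRange m).permutations' : Multiset (List (Fin m))) := by
  have nodup : (Finset.univ.val.map fun e : Perm (Fin m) => List.ofFn e).Nodup :=
    Finset.univ.nodup.map (List.ofFn_injective.comp DFunLike.coe_injective)
  refine Multiset.eq_of_le_of_card_le ((Multiset.le_iff_subset nodup).2 fun l hl => ?_) ?_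
  · obtain ⟨e, -, rfl⟩ := Multiset.mem_map.1 hl
    simpa [← List.ofFn_id] using e.ofFn_comp_perm id
  · simp [Fintype.card_perm, ← (List.permutations_perm_permutations' _).length_eq,
      List.length_permutations]

/-- The letters `i` that are directly followed by `i + 1` in a word. -/
def successions : List ℕ → Finset ℕ
  | [] => ∅
  | [_] => ∅
  | a :: b :: l => if b = a + 1 then insert a (successions (b :: l)) else successions (b :: l)

theorem successions_eq_empty_iff {l : List ℕ} :
    successions l = ∅ ↔ l.IsChain (fun a b => b ≠ a + 1) := by
  induction l using successions.induct <;> simp_all [successions]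

theorem mem_and_succ_mem_of_mem_successions {i : ℕ} {l : List ℕ} (hi : i ∈ successions l) :
    i ∈ l ∧ i + 1 ∈ l := by
  induction l using successions.induct <;> grind [successions]

/-- The effect on the set `S` of successions of a word of inserting a new maximum `t` directly
after the letter `x`. -/
def insertMaxAfter (t : ℕ) (S : Finset ℕ) (x : ℕ) : Finset ℕ :=
  if x + 1 = t then insert x S else S.erase x

theorem map_successions_permutations'Aux {t a : ℕ} {l : List ℕ} (nodup : (a :: l).Nodup)
    (lt : ∀ x ∈ a :: l, x < t) :
    (l.permutations'Aux t).map (fun w => successions (a :: w)) =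
      (a :: l).map (insertMaxAfter t (successions (a :: l))) := by
  induction l generalizing a with
  | nil => by_cases h : a + 1 = t <;> simp [successions, insertMaxAfter, h, Ne.symm]
  | cons b l ih =>
    have ih := ih nodup.of_cons fun x hx => lt x (List.mem_cons_of_mem a hx)
    let link (T : Finset ℕ) : Finset ℕ := if b = a + 1 then insert a T else T
    have succ_cons (w : List ℕ) : successions (a :: b :: w) = link (successions (b :: w)) := rfl
    have insert_after_head :
        successions (a :: t :: b :: l) = insertMaxAfter t (successions (a :: b :: l)) a := by
      have := mt (fun h => (mem_and_succ_mem_of_mem_successions h).1) (List.nodup_cons.1 nodup).1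
      have := lt b (by simp)
      simp only [successions, insertMaxAfter]
      grind
    have insert_later {x : ℕ} (hx : x ∈ b :: l) :
        link (insertMaxAfter t (successions (b :: l)) x) =
          insertMaxAfter t (successions (a :: b :: l)) x := by
      have : x ≠ a := by rintro rfl; exact (List.nodup_cons.1 nodup).1 hx
      simp only [succ_cons, link, insertMaxAfter]
      grind
    rw [List.permutations'Aux, List.map_cons, List.map_cons, insert_after_head, List.map_map]
    congr 1
    calc
      _ = ((l.permutations'Aux t).map fun w => successions (b :: w)).map link := by
        rw [List.map_map]; rfl
      _ = _ := by
        rw [ih, List.map_map]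
        exact List.map_congr_left fun x hx => insert_later hx

/-- The successions of the words `0 w₁ ⋯ w_m`, for all arrangements `w` of `1, …, m`. -/
def successionSets (m : ℕ) : Multiset (Finset ℕ) :=
  (((List.range' 1 m).permutations'.map fun w => successions (0 :: w)) : List (Finset ℕ))

theorem subset_range_of_mem_successionSets {m : ℕ} {S : Finset ℕ} (hS : S ∈ successionSets m) :
    S ⊆ Finset.range m := by
  obtain ⟨w, hw, rfl⟩ := List.mem_map.1 (Multiset.mem_coe.1 hS)
  intro i hi
  have := (mem_and_succ_mem_of_mem_successions hi).2
  rw [List.mem_cons, (List.mem_permutations'.1 hw).mem_iff, List.mem_range'_1] at this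
  rw [Finset.mem_range]
  omega

theorem map_successions_permutations'Aux_succ {m : ℕ} {w : List ℕ}
    (hw : w.Perm (List.range' 1 m)) :
    (((w.permutations'Aux (m + 1)).map fun w => successions (0 :: w) : List _) : Multiset _) =
      insert m (successions (0 :: w)) ::ₘ
        (Multiset.range m).map ((successions (0 :: w)).erase ·) := by
  have letters : List.Perm (0 :: w) (m :: List.range m) := by
    refine (hw.cons 0).trans ?_
    rw [← List.range'_succ (step := 1), ← List.range_eq_range', List.range_succ]
    exact List.perm_append_singleton _ _
  have nodup : (0 :: w).Nodup := by
    simp [letters.nodup_iff, List.nodup_range]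
  have lt (x) (hx : x ∈ 0 :: w) : x < m + 1 := by
    rw [letters.mem_iff, List.mem_cons, List.mem_range] at hx
    omega
  rw [map_successions_permutations'Aux nodup lt, Multiset.coe_eq_coe.2 (letters.map _),
    List.map_cons, ← Multiset.cons_coe]
  congr 1
  · simp [insertMaxAfter]
  · refine congrArg _ (List.map_congr_left fun x hx => if_neg ?_)
    have := List.mem_range.1 hx
    omega

theorem successionSets_succ (m : ℕ) :
    successionSets (m + 1) =
      (successionSets m).map (insert m) +
        ∑ x ∈ Finset.range m, (successionSets m).map (Finset.erase · x) := by
  have max_first : List.Perm (List.range' 1 (m + 1)) ((m + 1) :: List.range' 1 m) := by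
    rw [List.range'_concat, add_comm m]
    simp
  calc
    successionSets (m + 1) =
        (((List.range' 1 m).permutations' : Multiset (List ℕ)).bind fun w =>
          ((w.permutations'Aux (m + 1)).map fun w => successions (0 :: w) : List _)) := by
      rw [successionSets, Multiset.coe_eq_coe.2 (max_first.permutations'.map _),
        List.permutations', List.map_flatMap, Multiset.coe_bind]
    _ = (successionSets m).bind fun S =>
          insert m S ::ₘ (Multiset.range m).map (S.erase ·) := by
      rw [Multiset.bind_congr fun w hw =>
          map_successions_permutations'Aux_succ (List.mem_permutations'.1 hw),
        successionSets, ← Multiset.map_coe, Multiset.bind_map]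
    _ = _ := by
      rw [Multiset.bind_cons, Multiset.bind_map_comm]
      rfl

theorem count_successionSets_succ_of_mem {m : ℕ} {S : Finset ℕ} (hm : m ∈ S) :
    (successionSets (m + 1)).count S = (successionSets m).count (S.erase m) := by
  have notMem (T) (hT : T ∈ successionSets m) : m ∉ T := fun h =>
    Finset.notMem_range_self (subset_range_of_mem_successionSets hT h)
  have count_erase (x) (_ : x ∈ Finset.range m) :
      ((successionSets m).map (Finset.erase · x)).count S = 0 := by
    rw [Multiset.count_eq_zero, Multiset.mem_map]
    rintro ⟨T, hT, rfl⟩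
    exact notMem T hT (Finset.mem_of_mem_erase hm)
  rw [successionSets_succ, Multiset.count_add, Multiset.count_sum',
    count_map_insert_of_mem notMem hm, Finset.sum_eq_zero count_erase, add_zero]

theorem count_successionSets_succ_of_notMem {m : ℕ} {S : Finset ℕ} (hm : m ∉ S) :
    (successionSets (m + 1)).count S =
      ∑ x ∈ Finset.range m \ S,
        ((successionSets m).count S + (successionSets m).count (insert x S)) := by
  rw [successionSets_succ, Multiset.count_add, Multiset.count_sum',
    count_map_insert_of_notMem hm, zero_add]
  symm
  refine Finset.sum_subset_zero_on_sdiff Finset.sdiff_subset (fun x hx => ?_) fun x hx => ?_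
  · exact count_map_erase_of_mem (by grind)
  · exact (count_map_erase_of_notMem (Finset.mem_sdiff.1 hx).2).symm

theorem count_successionSets {m : ℕ} {S : Finset ℕ} (hS : S ⊆ Finset.range m) :
    (successionSets m).count S = numDerangements (m - S.card) := by
  induction m generalizing S with
  | zero =>
    obtain rfl : S = ∅ := by simpa using hS
    simp [successionSets, successions]
  | succ m ih =>
    by_cases hm : m ∈ S
    · have hS' : S.erase m ⊆ Finset.range m := by grind
      rw [count_successionSets_succ_of_mem hm, ih hS', Finset.card_erase_of_mem hm,
        Nat.sub_sub_right m (Finset.card_pos.2 ⟨m, hm⟩)]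
    · have hS' : S ⊆ Finset.range m := by grind
      have card_le : S.card ≤ m := by simpa using Finset.card_le_card hS'
      have count_insert (x) (hx : x ∈ Finset.range m \ S) :
          (successionSets m).count S + (successionSets m).count (insert x S) =
            numDerangements (m - S.card) + numDerangements (m - S.card - 1) := by
        obtain ⟨hxm, hxS⟩ := Finset.mem_sdiff.1 hx
        rw [ih hS', ih (Finset.insert_subset hxm hS'), Finset.card_insert_of_notMem hxS,
          Nat.sub_sub]
      rw [count_successionSets_succ_of_notMem hm, Finset.sum_congr rfl count_insert,
        Finset.sum_const, smul_eq_mul, Finset.card_sdiff_of_subset hS', Finset.card_range,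
        mul_numDerangements_add, Nat.sub_add_comm card_le]

theorem successionSets_eq_map_univ (m : ℕ) :
    successionSets m = Finset.univ.val.map fun e : Perm (Fin m) =>
      successions (0 :: (List.ofFn e).map fun k => k.val + 1) := by
  have letters : List.range' 1 m = (List.finRange m).map fun k => k.val + 1 := by
    rw [List.range'_eq_map_range]
    simp [← List.map_coe_finRange_eq_range, add_comm, comp_def]
  rw [successionSets, letters, ← List.map_permutations', List.map_map, ← Multiset.map_coe,
    ← map_ofFn_univ_perm, Multiset.map_map]
  rfl

theorem card_avoidsCyclicSucc_consZero (m : ℕ) :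
    Nat.card {e : Perm (Fin m) // AvoidsCyclicSucc (consZero e)} = numDerangements m := by
  classical
  have count_empty := count_successionSets (Finset.empty_subset (Finset.range m))
  rw [successionSets_eq_map_univ, Multiset.count_map] at count_empty
  simp only [eq_comm (a := ∅), successions_eq_empty_iff, ← avoidsCyclicSucc_consZero_iff,
    Finset.card_empty, Nat.sub_zero] at count_empty
  rw [Nat.card_eq_fintype_card, Fintype.card_subtype, ← count_empty]
  rfl

theorem DCount_succ (m : ℕ) : DCount (m + 1) = (m + 1) * numDerangements m := by
  rw [DCount, Nat.card_congr (subtypeEquivRight fun _ => avoidsSucc_and_not_containsN1_iff),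
    card_avoidsCyclicSucc, card_avoidsCyclicSucc_consZero]

theorem stmt_18 (n : ℕ) (hn : 1 ≤ n) :
    Nat.card {σ : Equiv.Perm (Fin n) // Nat.card {k : Fin n // σ k = k} = 1} =
      DCount n ∧
    Nat.card {σ : Equiv.Perm (Fin n) // Nat.card {k : Fin n // σ k = k} = 1} =
      n * numDerangements (n - 1) := by
  have card_one_fixed := card_perm_card_fixedPoints_eq_one (α := Fin n)
  rw [Fintype.card_fin] at card_one_fixed
  obtain ⟨m, rfl⟩ := Nat.exists_eq_add_of_le' hn
  exact ⟨card_one_fixed.trans (DCount_succ m).symm, card_one_fixed⟩
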